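/- arXiv:2010.04955 — 7 statements merged into one kernel-verified Lean document; each statement's English description precedes it below -/
import Mathlib

section
/- The correct-identification trust row r*, defined by r* j = 1 if j ∈ H and r* j = 0 otherwise, is an equilibrium of the trust dynamics: for every i ∈ H and every j ∈ Fin N, h i j r* = 0. -/
open Finset

/-- Labeling of agents: `1` for honest agents (members of `H`), `-1` for malicious agents. -/
noncomputable def eLab {N : ℕ} (H : Finset (Fin N)) (j : Fin N) : ℝ :=
  if j ∈ H then 1 else -1

/-- `x i j r = e j * ((∑ k in H \ {i,j}, r k) - (∑ k in Hᶜ \ {i,j}, r k))`. -/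
noncomputable def xDrift {N : ℕ} (H : Finset (Fin N)) (i j : Fin N) (r : Fin N → ℝ) : ℝ :=
  eLab H j * ((∑ k ∈ H \ {i, j}, r k) - (∑ k ∈ Hᶜ \ {i, j}, r k))

/-- The trust drift `h i j r`. -/
noncomputable def hDrift {N : ℕ} (H : Finset (Fin N)) (i j : Fin N) (r : Fin N → ℝ) : ℝ :=
  if r j = 1 then -max (-(xDrift H i j r)) 0 / ((N : ℝ) * ((N : ℝ) - 1))
  else if r j = 0 then max (xDrift H i j r) 0 / ((N : ℝ) * ((N : ℝ) - 1))
  else xDrift H i j r / ((N : ℝ) * ((N : ℝ) - 1))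

/-- The correct-identification trust row `r* j = 1` if `j ∈ H`, `0` otherwise,
is an equilibrium of the trust dynamics. -/
theorem correct_row_equilibrium (N : ℕ) (hN : 2 ≤ N) (H : Finset (Fin N))
    (rstar : Fin N → ℝ) (hr : ∀ j, rstar j = if j ∈ H then 1 else 0) :
    ∀ i ∈ H, ∀ j : Fin N, hDrift H i j rstar = 0 := by
  intro i _ j
  -- Every honest agent has trust `1` and every malicious one `0`, so the difference of sums in
  -- `xDrift` is nonnegative and `xDrift` has the sign of `eLab H j`; the truncation then kills it.
  have hHonest : 0 ≤ ∑ k ∈ H \ {i, j}, rstar k :=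
    Finset.sum_nonneg fun k _ => by rw [hr]; split_ifs <;> norm_num
  have hMalicious : ∑ k ∈ Hᶜ \ {i, j}, rstar k = 0 :=
    Finset.sum_eq_zero fun k hk => by
      rw [hr, if_neg (Finset.mem_compl.mp (Finset.mem_sdiff.mp hk).1)]
  by_cases hj : j ∈ H
  · simp [hDrift, xDrift, eLab, hr j, hj, hMalicious, hHonest]
  · simp [hDrift, xDrift, eLab, hr j, hj, hMalicious, hHonest]
end

section
/- The inverted trust row q, defined by q j = 0 if j ∈ H and q j = 1 otherwise (each honest agent trusts every malicious agent fully and every honest agent not at all), is also an equilibrium of the trust dynamics: for every i ∈ H and every j ∈ Fin N, h i j q = 0. -/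
open Finset

/-- The inverted trust row `q j = 0` if `j ∈ H`, `1` otherwise,
is also an equilibrium of the trust dynamics. -/
theorem inverted_row_equilibrium (N : ℕ) (hN : 2 ≤ N) (H : Finset (Fin N))
    (q : Fin N → ℝ) (hq : ∀ j, q j = if j ∈ H then 0 else 1) :
    ∀ i ∈ H, ∀ j : Fin N, hDrift H i j q = 0 := by
  intro i _ j
  have hS : ∑ k ∈ H \ {i, j}, q k = 0 :=
    Finset.sum_eq_zero fun k hk => by simp [hq, (Finset.mem_sdiff.mp hk).1]
  have hT : 0 ≤ ∑ k ∈ Hᶜ \ {i, j}, q k :=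
    Finset.sum_nonneg fun k _ => by rw [hq]; split_ifs <;> norm_num
  -- The malicious agents' trust sum enters with sign `-e j`, so the drift at `q j` points
  -- out of `[0, 1]` and is cut off: `x ≤ 0` where `q j = 0`, and `x ≥ 0` where `q j = 1`.
  by_cases hj : j ∈ H
  · have hx : xDrift H i j q ≤ 0 := by simp [xDrift, eLab, hj, hS, hT]
    simp [hDrift, hq j, hj, max_eq_right hx]
  · have hx : -xDrift H i j q ≤ 0 := by simp [xDrift, eLab, hj, hS, hT]
    simp only [hDrift, hq j, hj, if_false, if_true, max_eq_right hx, neg_zero, zero_div]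
end

section
/- Suppose the number of honest agents satisfies |H| > |Hᶜ| + 2 (equivalently, the number of malicious agents is strictly less than N/2 − 1). Let r be a trust row with r k ∈ [0,1] for all k and with r k = 1 for every honest agent k ∈ H. Then for every i ∈ H and every honest j ∈ H, the trust drift vanishes: h i j r = 0, i.e., full trust in honest agents is maintained by the dynamics on this region. -/
/-! Since `r j = 1` for honest `j`, the drift is the negative part of `xDrift H i j r` up to a
factor, so it suffices that `xDrift H i j r ≥ 0`. The honest sum equals `|H \ {i, j}| ≥ |H| - 2`,
while the malicious sum is at most `|Hᶜ|` because trust values lie in `[0, 1]`. -/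

open Finset

/-- If `|H| > |Hᶜ| + 2` and the trust row `r` takes values in `[0,1]` with `r k = 1`
for every honest `k`, then the drift at every honest attester vanishes. -/
theorem honest_full_trust_invariant (N : ℕ) (hN : 2 ≤ N) (H : Finset (Fin N))
    (hH : Hᶜ.card + 2 < H.card)
    (r : Fin N → ℝ) (hr01 : ∀ k, r k ∈ Set.Icc (0 : ℝ) 1)
    (hrH : ∀ k ∈ H, r k = 1) :
    ∀ i ∈ H, ∀ j ∈ H, hDrift H i j r = 0 := by
  intro i hi j hj
  have honest_sum : ∑ k ∈ H \ {i, j}, r k = ((H \ {i, j}).card : ℝ) := by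
    rw [Finset.sum_congr rfl (fun k hk => hrH k (Finset.mem_sdiff.mp hk).1)]
    simp
  have malicious_sum : ∑ k ∈ Hᶜ \ {i, j}, r k ≤ (Hᶜ.card : ℝ) :=
    calc ∑ k ∈ Hᶜ \ {i, j}, r k ≤ ∑ k ∈ Hᶜ, r k :=
          Finset.sum_le_sum_of_subset_of_nonneg Finset.sdiff_subset
            (fun k _ _ => (hr01 k).1)
      _ ≤ ∑ _k ∈ Hᶜ, (1 : ℝ) := Finset.sum_le_sum (fun k _ => (hr01 k).2)
      _ = (Hᶜ.card : ℝ) := by simp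
  -- Removing `i` and `j` costs at most two honest agents, so honest agents still prevail.
  have card_le : Hᶜ.card ≤ (H \ {i, j}).card := by
    have h1 : H.card - ({i, j} : Finset (Fin N)).card ≤ (H \ {i, j}).card :=
      Finset.le_card_sdiff _ _
    have h2 : ({i, j} : Finset (Fin N)).card ≤ 2 := Finset.card_le_two
    omega
  have card_le' : (Hᶜ.card : ℝ) ≤ ((H \ {i, j}).card : ℝ) := by exact_mod_cast card_le
  have x_nonneg : 0 ≤ xDrift H i j r := by
    simp only [xDrift, eLab, if_pos hj, one_mul, honest_sum]
    linarith
  simp [hDrift, hrH j hj, x_nonneg]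
end

section
/- Suppose the honest agents form a strict majority, |H| > |Hᶜ|. Let r be a trust row with r k ∈ [0,1] for all k and with r k = 1 for every honest agent k ∈ H. Then for every i ∈ H and every malicious agent j ∉ H with r j > 0, the trust drift is strictly negative with a uniform rate: h i j r ≤ -(|H| - |Hᶜ|)/(N*(N-1)) < 0. In particular, on the region where honest agents are fully trusted, the trust held in every malicious agent strictly decreases until it reaches 0. -/
/-!
For honest `i` and malicious `j`, removing `{i, j}` deletes exactly one element from each of `H`
and `Hᶜ`. Full trust in `H` makes the honest sum `|H| - 1`, and the bound `r ≤ 1` makes the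
malicious one at most `|Hᶜ| - 1`, so `xDrift ≤ -(|H| - |Hᶜ|) < 0` (`xDrift_le`). The truncation in
`hDrift` at `r j = 1` does not alter a negative `xDrift`, and the one at `r j = 0` is excluded by
`0 < r j`.
-/

open Finset

lemma xDrift_le {N : ℕ} (H : Finset (Fin N)) (r : Fin N → ℝ)
    (hr1 : ∀ k, r k ≤ 1) (hrH : ∀ k ∈ H, r k = 1)
    {i j : Fin N} (hi : i ∈ H) (hj : j ∉ H) :
    xDrift H i j r ≤ -((H.card : ℝ) - (Hᶜ.card : ℝ)) := by
  have hHi : H \ {i, j} = H.erase i := by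
    ext k
    simp only [mem_sdiff, mem_insert, mem_singleton, mem_erase]
    grind
  have hCj : Hᶜ \ {i, j} = Hᶜ.erase j := by
    ext k
    simp only [mem_sdiff, mem_insert, mem_singleton, mem_erase, mem_compl]
    grind
  have honest : ∑ k ∈ H.erase i, r k = (H.card : ℝ) - 1 := by
    rw [sum_congr rfl fun k hk => hrH k (mem_of_mem_erase hk)]
    simp [← cast_card_erase_of_mem hi]
  have malicious : ∑ k ∈ Hᶜ.erase j, r k ≤ (Hᶜ.card : ℝ) - 1 := by
    rw [← cast_card_erase_of_mem (mem_compl.2 hj)]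
    simpa using sum_le_card_nsmul (Hᶜ.erase j) r 1 fun k _ => hr1 k
  rw [xDrift, eLab, if_neg hj, hHi, hCj, honest]
  linarith

/-- If honest agents are a strict majority and fully trusted, the drift of trust in any
malicious agent with positive trust is strictly negative with a uniform rate. -/
theorem malicious_trust_decreases (N : ℕ) (hN : 2 ≤ N) (H : Finset (Fin N))
    (hH : Hᶜ.card < H.card)
    (r : Fin N → ℝ) (hr01 : ∀ k, r k ∈ Set.Icc (0 : ℝ) 1)
    (hrH : ∀ k ∈ H, r k = 1) :
    ∀ i ∈ H, ∀ j : Fin N, j ∉ H → 0 < r j →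
      hDrift H i j r ≤ -((H.card : ℝ) - (Hᶜ.card : ℝ)) / ((N : ℝ) * ((N : ℝ) - 1)) ∧
      -((H.card : ℝ) - (Hᶜ.card : ℝ)) / ((N : ℝ) * ((N : ℝ) - 1)) < 0 := by
  intro i hi j hj hpos
  have hN' : (2 : ℝ) ≤ N := by exact_mod_cast hN
  have hD : 0 < (N : ℝ) * ((N : ℝ) - 1) := mul_pos (by linarith) (by linarith)
  have hH' : (Hᶜ.card : ℝ) < H.card := by exact_mod_cast hH
  have hx := xDrift_le H r (fun k => (hr01 k).2) hrH hi hj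
  refine ⟨?_, div_neg_of_neg_of_pos (by linarith) hD⟩
  unfold hDrift
  split_ifs with h1 h0
  · rw [max_eq_left (by linarith), neg_neg]
    gcongr
  · exact absurd h0 hpos.ne'
  · gcongr
end

section
/- Suppose |H| ≥ |Hᶜ|. Let 𝟙 denote the all-ones trust row (every agent is initially assigned trust value 1). Then for every i ∈ H and every malicious agent j ∉ H, the trust drift at the initial state equals exactly h i j 𝟙 = -(|H| - |Hᶜ|)/(N*(N-1)); in particular it is strictly negative whenever |H| > |Hᶜ|, so starting from full mutual trust the trust in every malicious agent immediately decreases. -/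
/-!
Since `i` is honest and `j` malicious, removing `{i, j}` lowers both `|H|` and `|Hᶜ|` by one, so at
the all-ones row `xDrift` equals `-(|H| - |Hᶜ|)`. This is nonpositive by hypothesis, so the
truncation in `hDrift` at trust value `1` leaves it unchanged; `N ≥ 2` makes the denominator
positive.
-/

open Finset

/-- At the all-ones trust row, the drift of trust in every malicious agent equals exactly
`-(|H| - |Hᶜ|)/(N*(N-1))`; in particular it is strictly negative when `|H| > |Hᶜ|`. -/
theorem initial_drift_malicious (N : ℕ) (hN : 2 ≤ N) (H : Finset (Fin N))
    (hH : Hᶜ.card ≤ H.card) :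
    ∀ i ∈ H, ∀ j : Fin N, j ∉ H →
      hDrift H i j (fun _ => (1 : ℝ)) =
        -((H.card : ℝ) - (Hᶜ.card : ℝ)) / ((N : ℝ) * ((N : ℝ) - 1)) ∧
      (Hᶜ.card < H.card → hDrift H i j (fun _ => (1 : ℝ)) < 0) := by
  intro i hi j hj
  -- Deleting `{i, j}` removes exactly one honest agent (`i`) and one malicious agent (`j`).
  have hHs : H \ {i, j} = H.erase i := by
    ext k
    simp only [mem_sdiff, mem_insert, mem_singleton, mem_erase]
    grind
  have hCs : Hᶜ \ {i, j} = Hᶜ.erase j := by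
    ext k
    simp only [mem_sdiff, mem_insert, mem_singleton, mem_erase, mem_compl]
    grind
  have hx : xDrift H i j (fun _ => (1 : ℝ)) = -((H.card : ℝ) - (Hᶜ.card : ℝ)) := by
    have h1 : (((H.erase i).card : ℕ) : ℝ) + 1 = H.card := by
      exact_mod_cast card_erase_add_one hi
    have h2 : (((Hᶜ.erase j).card : ℕ) : ℝ) + 1 = Hᶜ.card := by
      exact_mod_cast card_erase_add_one (mem_compl.mpr hj)
    rw [xDrift, eLab, if_neg hj, hHs, hCs, ← h1, ← h2]
    simp only [sum_const, nsmul_eq_mul, mul_one]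
    ring
  have hle : (Hᶜ.card : ℝ) ≤ H.card := by exact_mod_cast hH
  have heq : hDrift H i j (fun _ => (1 : ℝ)) =
      -((H.card : ℝ) - (Hᶜ.card : ℝ)) / ((N : ℝ) * ((N : ℝ) - 1)) := by
    rw [hDrift, if_pos rfl, hx, neg_neg, max_eq_left (sub_nonneg.mpr hle)]
  refine ⟨heq, fun hlt => ?_⟩
  have hlt' : (Hᶜ.card : ℝ) < H.card := by exact_mod_cast hlt
  have hN' : (2 : ℝ) ≤ N := by exact_mod_cast hN
  rw [heq]
  exact div_neg_of_neg_of_pos (by linarith) (mul_pos (by linarith) (by linarith))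
end

section
/- Let r be a trust row with r k ∈ [0,1] for all k and with r k = 0 for every malicious agent k ∉ H (all malicious agents fully distrusted). Then for every i ∈ H and every honest j ∈ H, the trust drift is nonnegative: h i j r ≥ 0, i.e., once malicious agents are fully distrusted, the trust held in honest agents can only increase. -/
open Finset

/-- If all malicious agents are fully distrusted, the drift of trust in every honest
agent is nonnegative. -/
theorem honest_trust_nondecreasing (N : ℕ) (hN : 2 ≤ N) (H : Finset (Fin N))
    (r : Fin N → ℝ) (hr01 : ∀ k, r k ∈ Set.Icc (0 : ℝ) 1)
    (hrM : ∀ k : Fin N, k ∉ H → r k = 0) :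
    ∀ i ∈ H, ∀ j ∈ H, 0 ≤ hDrift H i j r := by
  intro i _ j hj
  have hD : (0 : ℝ) ≤ (N : ℝ) * ((N : ℝ) - 1) := by
    have h2 : (2 : ℝ) ≤ N := by exact_mod_cast hN
    exact mul_nonneg (by linarith) (by linarith)
  -- With the malicious sum gone and `e j = 1`, only a sum of nonnegative trusts remains.
  have hx : 0 ≤ xDrift H i j r := by
    have hM : ∑ k ∈ Hᶜ \ {i, j}, r k = 0 :=
      Finset.sum_eq_zero fun k hk =>
        hrM k (Finset.mem_compl.mp (Finset.mem_sdiff.mp hk).1)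
    rw [xDrift, eLab, if_pos hj, hM, one_mul, sub_zero]
    exact Finset.sum_nonneg fun k _ => (hr01 k).1
  unfold hDrift
  split_ifs
  · rw [max_eq_right (neg_nonpos.mpr hx), neg_zero, zero_div]
  · exact div_nonneg (le_max_right _ _) hD
  · exact div_nonneg hx hD
end

section
/- If |H| ≥ 3, then for any two distinct honest agents i, j ∈ H, the drift map r ↦ h i j r (as a function of the trust row r : Fin N → ℝ, with the product topology on Fin N → ℝ) is not continuous at the correct-identification row r* defined by r* k = 1 if k ∈ H and r* k = 0 otherwise. (The driving function of the trust dynamics is discontinuous at boundary points of the unit cube, which forces the use of a differential inclusion rather than a differential equation.) -/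
/-!
At the correct-identification row `r*` the trust `r* j` is `1` and the outward drift
`x i j r*` is positive, so the drift is truncated to `0`. Moving only the `j`-th coordinate
does not change `x i j` (the sums omit `k = j`), so along rows `Function.update r* j t` with
`t ≠ 0, 1` the drift is the fixed number `x i j r* / (N (N - 1))`. Since `|H| ≥ 3`,
`x i j r* = |H \ {i, j}|` is positive, and letting `t → 1` contradicts continuity at `r*`.
-/

open Finset

/-- `x i j` does not depend on the `j`-th coordinate, which both sums omit. -/
lemma xDrift_update {N : ℕ} (H : Finset (Fin N)) (i j : Fin N) (r : Fin N → ℝ) (t : ℝ) :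
    xDrift H i j (Function.update r j t) = xDrift H i j r := by
  have key : ∀ S : Finset (Fin N),
      ∑ k ∈ S \ {i, j}, Function.update r j t k = ∑ k ∈ S \ {i, j}, r k := by
    intro S
    refine Finset.sum_congr rfl fun k hk => Function.update_of_ne ?_ _ _
    rintro rfl
    simp at hk
  simp only [xDrift, key]

lemma xDrift_correct_pos {N : ℕ} (H : Finset (Fin N)) (hH : 3 ≤ H.card) (i j : Fin N)
    (hj : j ∈ H) : 0 < xDrift H i j (fun k => if k ∈ H then (1 : ℝ) else 0) := by
  have h1 : ∑ k ∈ H \ {i, j}, (if k ∈ H then (1 : ℝ) else 0) = ((H \ {i, j}).card : ℝ) := by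
    rw [Finset.sum_congr rfl fun k hk => if_pos (Finset.mem_sdiff.1 hk).1]
    simp
  have h2 : ∑ k ∈ Hᶜ \ {i, j}, (if k ∈ H then (1 : ℝ) else 0) = 0 :=
    Finset.sum_eq_zero fun k hk =>
      if_neg (Finset.mem_compl.1 (Finset.mem_sdiff.1 hk).1)
  have hcard : 0 < (H \ {i, j}).card := by
    have := Finset.le_card_sdiff {i, j} H
    have := Finset.card_le_two (a := i) (b := j)
    omega
  simp only [xDrift, eLab, if_pos hj, h1, h2, sub_zero, one_mul]
  exact_mod_cast hcard

/-- If `|H| ≥ 3`, the drift map `r ↦ h i j r` is discontinuous at the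
correct-identification row `r*` for any two distinct honest agents `i, j`. -/
theorem drift_discontinuous (N : ℕ) (hN : 2 ≤ N) (H : Finset (Fin N))
    (hH : 3 ≤ H.card) (i j : Fin N) (hi : i ∈ H) (hj : j ∈ H) (hij : i ≠ j) :
    ¬ ContinuousAt (fun r : Fin N → ℝ => hDrift H i j r)
      (fun k => if k ∈ H then (1 : ℝ) else 0) := by
  intro hc
  have hpos := xDrift_correct_pos H hH i j hj
  set R : Fin N → ℝ := fun k => if k ∈ H then (1 : ℝ) else 0 with hR
  have hRj : R j = 1 := if_pos hj
  have hN' : (2 : ℝ) ≤ N := by exact_mod_cast hN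
  have hden : 0 < (N : ℝ) * ((N : ℝ) - 1) := mul_pos (by linarith) (by linarith)
  have hval : hDrift H i j R = 0 := by
    simp [hDrift, hRj, hpos.le]
  have hself : Function.update R j 1 = R := by
    rw [← hRj, Function.update_eq_self]
  have hpath : Filter.Tendsto (fun t : ℝ => Function.update R j t) (nhds 1) (nhds R) := by
    have h : Continuous fun t : ℝ => Function.update R j t :=
      continuous_const.update j continuous_id
    simpa only [hself] using h.tendsto 1
  have hlim : Filter.Tendsto (fun t : ℝ => hDrift H i j (Function.update R j t))
      (nhdsWithin 1 {1}ᶜ) (nhds 0) := by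
    have h := (hc.tendsto.comp hpath).mono_left (nhdsWithin_le_nhds (s := {1}ᶜ))
    rwa [hval] at h
  have hconst : (fun t : ℝ => hDrift H i j (Function.update R j t)) =ᶠ[nhdsWithin 1 {1}ᶜ]
      fun _ => xDrift H i j R / ((N : ℝ) * ((N : ℝ) - 1)) := by
    filter_upwards [self_mem_nhdsWithin,
      nhdsWithin_le_nhds (isOpen_ne.mem_nhds (one_ne_zero (α := ℝ)))] with t ht1 ht0
    have ht1 : t ≠ 1 := ht1
    have ht0 : t ≠ 0 := ht0
    simp [hDrift, xDrift_update, ht1, ht0]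
  have h0 := tendsto_nhds_unique (hlim.congr' hconst) tendsto_const_nhds
  exact (div_pos hpos hden).ne h0
end
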